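/- (Theorem 4.2, part 1.) Let A = (A₁, A₂) be a commuting 2-contraction on H and λ = (λ₁,λ₂) ∈ 𝔻², λ ≠ 0. Then: (i) for every X ∈ H ⊕ H, ‖D_A((1_{H⊕H} − Λ*A)⁻¹(D_Λ X))‖ = ‖D_{Φ_λ(A)} X‖; (ii) the closure of the range of the operator D_A(1_{H⊕H} − Λ*A)⁻¹D_Λ equals the closure of the range of D_A; (iii) for every x ∈ H, ‖D_{A*}((1_H − ΛA*)⁻¹(D_{Λ*} x))‖ = ‖D_{Φ_λ(A)*} x‖; (iv) the closure of the range of D_{A*}(1_H − ΛA*)⁻¹D_{Λ*} equals the closure of the range of D_{A*}. (Hence the maps Ω(D_{Φ_λ(A)}X) = D_A(1_{H⊕H} − Λ*A)⁻¹D_Λ X and Ω*(D_{Φ_λ(A)*}x) = D_{A*}(1_H − ΛA*)⁻¹D_{Λ*} x extend to unitaries between the corresponding defect spaces.) -/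

import Mathlib

open ContinuousLinearMap Filter

/-!
Write `L` for the row operator of the scalars, so that `L L* = r` with `r = ‖μ₁‖² + ‖μ₂‖²` and
`s² = 1 - r > 0`. The defect operator `D_L` acts as `s` on the range of `L*`
(`defect_apply_adjoint`), hence `L D_L = s L`.

For the first norm identity put `Y = (1 - L*A)⁻¹ D_L X`. Then `Y = D_L X + L*(A Y)` and
`Φ X = L X - s A Y`, and expanding `‖Y‖² - ‖A Y‖²` and `‖X‖² - ‖Φ X‖²` gives the same expression.
For the second, put `y = s (1 - L A*)⁻¹ x`. Then `y = s x + L(A* y)` and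
`Φ* x = L* x - D_L (A* y)`, and the same kind of expansion applies.

The range statements hold even without closures: `(1 - L*A)⁻¹`, `D_L`, `(1 - L A*)⁻¹` and `s` are
all surjective.
-/

section Defect

variable {E F : Type*} [NormedAddCommGroup E] [InnerProductSpace ℂ E] [CompleteSpace E]
  [NormedAddCommGroup F] [InnerProductSpace ℂ F] [CompleteSpace F]

lemma norm_sq_defect {D : E →L[ℂ] E} (hD : 0 ≤ D) {B : E →L[ℂ] F}
    (hsq : D * D = 1 - adjoint B ∘L B) (x : E) : ‖D x‖ ^ 2 = ‖x‖ ^ 2 - ‖B x‖ ^ 2 := by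
  have hsa : adjoint D = D := ((nonneg_iff_isPositive D).1 hD).isSelfAdjoint.adjoint_eq
  have h : inner ℂ (D x) (D x) = inner ℂ x x - inner ℂ (B x) (B x) := by
    have h1 : D (D x) = x - adjoint B (B x) := by
      simpa using congrArg (fun T : E →L[ℂ] E => T x) hsq
    rw [← adjoint_inner_right, hsa, h1, inner_sub_right, adjoint_inner_right]
  simp only [inner_self_eq_norm_sq_to_K] at h
  exact_mod_cast h

/-- If `L L* = 1 - s²` with `s > 0`, then the defect operator `D_L` acts as `s` on the range of
`L*`: there `(D_L + s)(D_L - s) = 0`, and `D_L + s` is injective because `D_L ≥ 0`. -/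
lemma defect_apply_adjoint {D : E →L[ℂ] E} (hD : 0 ≤ D) {L : E →L[ℂ] F}
    (hsq : D * D = 1 - adjoint L ∘L L) {s : ℝ} (hs : 0 < s)
    (hL : ∀ x, L (adjoint L x) = ((1 - s ^ 2 : ℝ) : ℂ) • x) (x : F) :
    D (adjoint L x) = (s : ℂ) • adjoint L x := by
  set w := D (adjoint L x) - (s : ℂ) • adjoint L x with hw
  have h1 : D (D (adjoint L x)) = adjoint L x - adjoint L (L (adjoint L x)) := by
    simpa using congrArg (fun T : E →L[ℂ] E => T (adjoint L x)) hsq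
  have h2 : D w = -((s : ℂ) • w) := by
    rw [hw, map_sub, h1, hL, map_smul, map_smul]
    push_cast
    module
  have h3 : 0 ≤ RCLike.re (inner ℂ (D w) w) :=
    ((nonneg_iff_isPositive D).1 hD).re_inner_nonneg_left w
  have h4 : RCLike.re (inner ℂ (D w) w) = -(s * ‖w‖ ^ 2) := by
    rw [h2, inner_neg_left, inner_smul_left, inner_self_eq_norm_sq_to_K]
    simp [← Complex.ofReal_pow]
  have h5 : ‖w‖ ^ 2 = 0 := by
    have := sq_nonneg ‖w‖
    nlinarith
  have h6 : w = 0 := by simpa using h5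
  exact sub_eq_zero.1 h6

/-- `D_L` is surjective since `D_L²` is, with right inverse `1 + s⁻² L*L`. -/
lemma defect_surjective {D : E →L[ℂ] E} {L : E →L[ℂ] F}
    (hsq : D * D = 1 - adjoint L ∘L L) {s : ℝ} (hs : 0 < s)
    (hL : ∀ x, L (adjoint L x) = ((1 - s ^ 2 : ℝ) : ℂ) • x) : Function.Surjective D := by
  intro x
  refine ⟨D (x + ((s : ℂ) ^ 2)⁻¹ • adjoint L (L x)), ?_⟩
  have h1 : ∀ y, D (D y) = y - adjoint L (L y) := fun y => by
    simpa using congrArg (fun T : E →L[ℂ] E => T y) hsq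
  have hs' : (s : ℂ) ≠ 0 := by exact_mod_cast hs.ne'
  rw [h1, map_add, map_smul, hL, map_add, map_smul, map_smul]
  push_cast
  match_scalars <;> field_simp
  ring

variable {A L : E →L[ℂ] F} {DL : E →L[ℂ] E} {s : ℝ}

lemma row_defect_intertwine (hDL : 0 ≤ DL) (hsq : DL * DL = 1 - adjoint L ∘L L) (hs : 0 < s)
    (hL : ∀ x, L (adjoint L x) = ((1 - s ^ 2 : ℝ) : ℂ) • x) (x : E) :
    L (DL x) = (s : ℂ) • L x := by
  have hsa : adjoint DL = DL := ((nonneg_iff_isPositive DL).1 hDL).isSelfAdjoint.adjoint_eq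
  refine ext_inner_left ℂ fun v => ?_
  rw [← adjoint_inner_left, ← hsa, adjoint_inner_right, defect_apply_adjoint hDL hsq hs hL,
    inner_smul_left, inner_smul_right, adjoint_inner_left]
  simp

lemma norm_sq_adjoint_row (hL : ∀ x, L (adjoint L x) = ((1 - s ^ 2 : ℝ) : ℂ) • x) (x : F) :
    ‖adjoint L x‖ ^ 2 = (1 - s ^ 2) * ‖x‖ ^ 2 := by
  have h : inner ℂ (adjoint L x) (adjoint L x) = ((1 - s ^ 2 : ℝ) : ℂ) * inner ℂ x x := by
    rw [adjoint_inner_left, hL, inner_smul_right]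
  rw [@norm_sq_eq_re_inner ℂ, @norm_sq_eq_re_inner ℂ F _ _ _ x, h]
  exact Complex.re_ofReal_mul _ _

/-- The identity `‖Y‖² - ‖A Y‖² = ‖X‖² - ‖Φ X‖²` for `Y = (1 - L*A)⁻¹ D_L X`. -/
lemma norm_sq_defect_moebius (hDL : 0 ≤ DL) (hsq : DL * DL = 1 - adjoint L ∘L L) (hs : 0 < s)
    (hL : ∀ x, L (adjoint L x) = ((1 - s ^ 2 : ℝ) : ℂ) • x)
    {T : F →L[ℂ] F} (hT : T * (1 - A ∘L adjoint L) = 1)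
    {S : E →L[ℂ] E} (hS : (1 - adjoint L ∘L A) * S = 1) (X : E) :
    ‖S (DL X)‖ ^ 2 - ‖A (S (DL X))‖ ^ 2 =
      ‖X‖ ^ 2 - ‖(L - (s : ℂ) • (T ∘L A ∘L DL)) X‖ ^ 2 := by
  set Y := S (DL X) with hY
  have h1 : Y - adjoint L (A Y) = DL X := by
    simpa using congrArg (fun R : E →L[ℂ] E => R (DL X)) hS
  have h2 : T (A (DL X)) = A Y := by
    rw [← h1, map_sub]
    simpa using congrArg (fun R : F →L[ℂ] F => R (A Y)) hT
  have h3 : Y = DL X + adjoint L (A Y) := by rw [← h1]; abel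
  have h4 : ‖Y‖ ^ 2 = ‖DL X + adjoint L (A Y)‖ ^ 2 := congrArg (fun z => ‖z‖ ^ 2) h3
  have h5 : RCLike.re (inner ℂ (DL X) (adjoint L (A Y))) =
      s * RCLike.re (inner ℂ (L X) (A Y)) := by
    rw [adjoint_inner_right, row_defect_intertwine hDL hsq hs hL, inner_smul_left]
    simp
  have h6 : RCLike.re (inner ℂ (L X) ((s : ℂ) • A Y)) =
      s * RCLike.re (inner ℂ (L X) (A Y)) := by
    rw [inner_smul_right]
    simp
  have h7 : ‖(s : ℂ) • A Y‖ ^ 2 = s ^ 2 * ‖A Y‖ ^ 2 := by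
    rw [norm_smul, mul_pow]; simp
  have h8 : (L - (s : ℂ) • (T ∘L A ∘L DL)) X = L X - (s : ℂ) • A Y := by simp [h2]
  rw [h8, h4, @norm_add_sq ℂ, @norm_sub_sq ℂ, h5, h6, h7, norm_sq_defect hDL hsq,
    norm_sq_adjoint_row hL]
  ring

/-- The identity `‖y‖² - ‖A* y‖² = ‖x‖² - ‖Φ* x‖²` for `y = s (1 - L A*)⁻¹ x`. -/
lemma norm_sq_defect_moebius_adjoint (hDL : 0 ≤ DL) (hsq : DL * DL = 1 - adjoint L ∘L L)
    (hs : 0 < s) (hL : ∀ x, L (adjoint L x) = ((1 - s ^ 2 : ℝ) : ℂ) • x)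
    {T : F →L[ℂ] F} (hT : T * (1 - A ∘L adjoint L) = 1)
    {T' : F →L[ℂ] F} (hT' : T' * (1 - L ∘L adjoint A) = 1)
    (hT'' : (1 - L ∘L adjoint A) * T' = 1) (x : F) :
    ‖T' ((s : ℂ) • x)‖ ^ 2 - ‖adjoint A (T' ((s : ℂ) • x))‖ ^ 2 =
      ‖x‖ ^ 2 - ‖adjoint (L - (s : ℂ) • (T ∘L A ∘L DL)) x‖ ^ 2 := by
  have hsa : adjoint DL = DL := ((nonneg_iff_isPositive DL).1 hDL).isSelfAdjoint.adjoint_eq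
  -- By uniqueness of inverses, `T' = T*`.
  have hadj : adjoint T = T' := by
    have h := congrArg star hT
    rw [star_mul, star_sub, star_one, star_eq_adjoint, star_eq_adjoint, adjoint_comp,
      adjoint_adjoint] at h
    exact (left_inv_eq_right_inv hT' h).symm
  set y := T' ((s : ℂ) • x) with hy
  have h1 : y - L (adjoint A y) = (s : ℂ) • x := by
    exact congrArg (fun R : F →L[ℂ] F => R ((s : ℂ) • x)) hT''
  have h3 : y = (s : ℂ) • x + L (adjoint A y) := by rw [← h1]; abel
  have h4 : ‖y‖ ^ 2 = ‖(s : ℂ) • x + L (adjoint A y)‖ ^ 2 := congrArg (fun z => ‖z‖ ^ 2) h3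
  have h8 : adjoint (L - (s : ℂ) • (T ∘L A ∘L DL)) x = adjoint L x - DL (adjoint A y) := by
    refine ext_inner_right ℂ fun v => ?_
    rw [adjoint_inner_left, inner_sub_left, adjoint_inner_left, ← hsa, adjoint_inner_left,
      adjoint_inner_left, hy, ← hadj, adjoint_inner_left, inner_smul_left, hsa]
    simp only [sub_apply, smul_apply, coe_comp, Function.comp_apply, inner_sub_right,
      inner_smul_right, Complex.conj_ofReal]
  have h5 : RCLike.re (inner ℂ (adjoint L x) (DL (adjoint A y))) =
      s * RCLike.re (inner ℂ x (L (adjoint A y))) := by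
    rw [adjoint_inner_left, row_defect_intertwine hDL hsq hs hL, inner_smul_right]
    simp
  have h6 : RCLike.re (inner ℂ ((s : ℂ) • x) (L (adjoint A y))) =
      s * RCLike.re (inner ℂ x (L (adjoint A y))) := by
    rw [inner_smul_left]
    simp
  have h7 : ‖(s : ℂ) • x‖ ^ 2 = s ^ 2 * ‖x‖ ^ 2 := by
    rw [norm_smul, mul_pow]; simp
  rw [h8, h4, @norm_add_sq ℂ, @norm_sub_sq ℂ, h5, h6, h7, norm_sq_defect hDL hsq,
    norm_sq_adjoint_row hL]
  ring

end Defect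

lemma adjoint_row_apply {H : Type*} [NormedAddCommGroup H] [InnerProductSpace ℂ H]
    [CompleteSpace H] {B₁ B₂ : H →L[ℂ] H} {B : WithLp 2 (H × H) →L[ℂ] H}
    (hB : ∀ x y : H, B ((WithLp.equiv 2 (H × H)).symm (x, y)) = B₁ x + B₂ y) (x : H) :
    adjoint B x = (WithLp.equiv 2 (H × H)).symm (adjoint B₁ x, adjoint B₂ x) := by
  refine ext_inner_right ℂ fun v => ?_
  have hv : B v = B₁ v.fst + B₂ v.snd := hB v.fst v.snd
  rw [adjoint_inner_left, hv, inner_add_right, WithLp.prod_inner_apply]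
  simp [adjoint_inner_left]

theorem omega_unitaries
    {H : Type*} [NormedAddCommGroup H] [InnerProductSpace ℂ H] [CompleteSpace H]
    (A₁ A₂ : H →L[ℂ] H)
    (hcomm : A₁ * A₂ = A₂ * A₁)
    (hcontr : A₁ * adjoint A₁ + A₂ * adjoint A₂ ≤ 1)
    (Dstar : H →L[ℂ] H) (hDstar_pos : 0 ≤ Dstar)
    (hDstar_sq : Dstar * Dstar = 1 - A₁ * adjoint A₁ - A₂ * adjoint A₂)
    (Arow : WithLp 2 (H × H) →L[ℂ] H)
    (hArow : ∀ x y : H, Arow ((WithLp.equiv 2 (H × H)).symm (x, y)) = A₁ x + A₂ y)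
    (DA : WithLp 2 (H × H) →L[ℂ] WithLp 2 (H × H)) (hDA_pos : 0 ≤ DA)
    (hDA_sq : DA * DA = 1 - (adjoint Arow) ∘L Arow)
    (μ₁ μ₂ : ℂ) (hμ : ‖μ₁‖ ^ 2 + ‖μ₂‖ ^ 2 < 1) (hμ0 : (μ₁, μ₂) ≠ ((0 : ℂ), (0 : ℂ)))
    (s : ℝ) (hs : s = Real.sqrt (1 - ‖μ₁‖ ^ 2 - ‖μ₂‖ ^ 2))
    (Lrow : WithLp 2 (H × H) →L[ℂ] H)
    (hLrow : ∀ x y : H, Lrow ((WithLp.equiv 2 (H × H)).symm (x, y)) = μ₁ • x + μ₂ • y)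
    (DL : WithLp 2 (H × H) →L[ℂ] WithLp 2 (H × H)) (hDL_pos : 0 ≤ DL)
    (hDL_sq : DL * DL = 1 - (adjoint Lrow) ∘L Lrow)
    (T₁ : H →L[ℂ] H) (hT₁ : T₁ * (1 - Arow ∘L adjoint Lrow) = 1)
    (hT₁' : (1 - Arow ∘L adjoint Lrow) * T₁ = 1)
    (T₂ : H →L[ℂ] H) (hT₂ : T₂ * (1 - Lrow ∘L adjoint Arow) = 1)
    (hT₂' : (1 - Lrow ∘L adjoint Arow) * T₂ = 1)
    (S₂ : WithLp 2 (H × H) →L[ℂ] WithLp 2 (H × H))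
    (hS₂ : S₂ * (1 - (adjoint Lrow) ∘L Arow) = 1) (hS₂' : (1 - (adjoint Lrow) ∘L Arow) * S₂ = 1)
    (Phi : WithLp 2 (H × H) →L[ℂ] H)
    (hPhi : Phi = (Lrow - (s : ℂ) • (T₁ ∘L Arow ∘L DL)))
    (DB : WithLp 2 (H × H) →L[ℂ] WithLp 2 (H × H)) (hDB_pos : 0 ≤ DB)
    (hDB_sq : DB * DB = 1 - (adjoint Phi) ∘L Phi)
    (DBstar : H →L[ℂ] H) (hDBstar_pos : 0 ≤ DBstar)
    (hDBstar_sq : DBstar * DBstar = 1 - Phi ∘L (adjoint Phi)) :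
    (∀ X : WithLp 2 (H × H), ‖DA (S₂ (DL X))‖ = ‖DB X‖) ∧
      closure (Set.range ⇑(DA * S₂ * DL)) = closure (Set.range ⇑DA) ∧
      (∀ x : H, ‖Dstar (T₂ ((s : ℂ) • x))‖ = ‖DBstar x‖) ∧
      closure (Set.range ⇑(Dstar * T₂ * ((s : ℂ) • (1 : H →L[ℂ] H)))) =
        closure (Set.range ⇑Dstar) := by
  have hspos : 0 < s := by rw [hs]; apply Real.sqrt_pos.2; linarith
  have hs2 : s ^ 2 = 1 - ‖μ₁‖ ^ 2 - ‖μ₂‖ ^ 2 := by rw [hs]; apply Real.sq_sqrt; linarith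
  have hL : ∀ x, Lrow (adjoint Lrow x) = ((1 - s ^ 2 : ℝ) : ℂ) • x := by
    intro x
    have h := adjoint_row_apply (B₁ := μ₁ • (1 : H →L[ℂ] H)) (B₂ := μ₂ • (1 : H →L[ℂ] H))
      (B := Lrow) (by simpa using hLrow) x
    have hstar : ∀ μ : ℂ, adjoint (μ • (1 : H →L[ℂ] H)) x = (starRingEnd ℂ) μ • x := fun μ => by
      rw [← star_eq_adjoint, star_smul, star_one]; simp
    rw [h, hLrow, hstar, hstar, smul_smul, smul_smul, ← add_smul, Complex.mul_conj,
      Complex.mul_conj, Complex.normSq_eq_norm_sq, Complex.normSq_eq_norm_sq, hs2]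
    congr 1
    push_cast
    ring
  have hAA : Dstar * Dstar = 1 - adjoint (adjoint Arow) ∘L adjoint Arow := by
    rw [hDstar_sq, adjoint_adjoint]
    ext x
    simp only [sub_apply, coe_comp, Function.comp_apply, adjoint_row_apply hArow, hArow]
    abel
  have hDBs : DBstar * DBstar = 1 - adjoint (adjoint Phi) ∘L adjoint Phi := by
    rw [hDBstar_sq, adjoint_adjoint]
  have hS₂surj : Function.Surjective S₂ := fun x =>
    ⟨(1 - (adjoint Lrow) ∘L Arow) x,
      congrArg (fun R : WithLp 2 (H × H) →L[ℂ] WithLp 2 (H × H) => R x) hS₂⟩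
  have hT₂surj : Function.Surjective T₂ := fun x =>
    ⟨(1 - Lrow ∘L adjoint Arow) x, congrArg (fun R : H →L[ℂ] H => R x) hT₂⟩
  have hssurj : Function.Surjective ((s : ℂ) • (1 : H →L[ℂ] H)) := fun x =>
    ⟨(s : ℂ)⁻¹ • x, smul_inv_smul₀ (Complex.ofReal_ne_zero.2 hspos.ne') x⟩
  refine ⟨fun X => ?_, ?_, fun x => ?_, ?_⟩
  · rw [← sq_eq_sq₀ (norm_nonneg _) (norm_nonneg _), norm_sq_defect hDA_pos hDA_sq,
      norm_sq_defect hDB_pos hDB_sq, hPhi]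
    exact norm_sq_defect_moebius hDL_pos hDL_sq hspos hL hT₁ hS₂' X
  · congr 1
    exact (hS₂surj.comp (defect_surjective hDL_sq hspos hL)).range_comp DA
  · rw [← sq_eq_sq₀ (norm_nonneg _) (norm_nonneg _), norm_sq_defect hDstar_pos hAA,
      norm_sq_defect hDBstar_pos hDBs, hPhi]
    exact norm_sq_defect_moebius_adjoint hDL_pos hDL_sq hspos hL hT₁ hT₂ hT₂' x
  · congr 1
    exact (hT₂surj.comp hssurj).range_comp Dstar
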